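/- Let F be a field with char(F) = 2, let S_2 be any one of the sets B_2, C_2, D_2, and let T : M_2(F) → M_2(F) be a bijective linear map. Then T(S_2) ⊆ S_2 if and only if there exist invertible matrices P, Q ∈ M_2(F) with det(PQ) = 1 such that either T(X) = P·X·Q for all X ∈ M_2(F), or T(X) = P·Xᵗ·Q for all X ∈ M_2(F). -/

import Mathlib

/-!
In characteristic two an involution has determinant one, and conversely a `2 × 2` matrix `A` of
determinant one is `J * (J * A)` for any `J` of determinant one with `J` and `J * A` of trace zero.
So each of the three sets is `{A | A.det = 1}`.

Along the line through `B` in a singular direction `N` with `trace (adjugate B * N) = 0`, the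
determinant is constantly `det B`. If `T` preserves determinant one, this forces `T N` to be
singular as soon as the field has three elements; over the field with two elements it follows by
counting. A linear map preserving singularity scales the determinant by `det (T 1)`, so `T`
preserves the determinant. Splitting the singular matrices `T E₁₁` and `T E₂₂` as columns times rows
reduces to a map that fixes `E₁₁` and `E₂₂`. Preservation of the determinant and of its polar form
`trace (adjugate A * B)` then leaves only diagonal equivalences, up to transposition.
-/

open Matrix

/-- The set of matrices that are products of two involutions. -/
def ProdInv2 (F : Type*) [Field F] (n : ℕ) : Set (Matrix (Fin n) (Fin n) F) :=
  {A | ∃ J₁ J₂ : Matrix (Fin n) (Fin n) F, J₁ * J₁ = 1 ∧ J₂ * J₂ = 1 ∧ A = J₁ * J₂}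

/-- The set of matrices that are products of three involutions. -/
def ProdInv3 (F : Type*) [Field F] (n : ℕ) : Set (Matrix (Fin n) (Fin n) F) :=
  {A | ∃ J₁ J₂ J₃ : Matrix (Fin n) (Fin n) F,
    J₁ * J₁ = 1 ∧ J₂ * J₂ = 1 ∧ J₃ * J₃ = 1 ∧ A = J₁ * J₂ * J₃}

/-- The set of matrices that are products of four involutions. -/
def ProdInv4 (F : Type*) [Field F] (n : ℕ) : Set (Matrix (Fin n) (Fin n) F) :=
  {A | ∃ J₁ J₂ J₃ J₄ : Matrix (Fin n) (Fin n) F,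
    J₁ * J₁ = 1 ∧ J₂ * J₂ = 1 ∧ J₃ * J₃ = 1 ∧ J₄ * J₄ = 1 ∧ A = J₁ * J₂ * J₃ * J₄}

section CommRing

variable {R : Type*} [CommRing R]

lemma mul_self_fin_two (A : Matrix (Fin 2) (Fin 2) R) : A * A = A.trace • A - A.det • 1 := by
  ext i j
  fin_cases i <;> fin_cases j <;>
    simp [mul_apply, Fin.sum_univ_two, det_fin_two, trace_fin_two] <;> ring

lemma trace_mul_fin_two (A B : Matrix (Fin 2) (Fin 2) R) :
    (A * B).trace = A 0 0 * B 0 0 + A 0 1 * B 1 0 + A 1 0 * B 0 1 + A 1 1 * B 1 1 := by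
  simp only [trace_fin_two, mul_apply, Fin.sum_univ_two]
  ring

lemma trace_adjugate_mul_fin_two (A B : Matrix (Fin 2) (Fin 2) R) :
    (A.adjugate * B).trace =
      A 1 1 * B 0 0 - A 0 1 * B 1 0 - A 1 0 * B 0 1 + A 0 0 * B 1 1 := by
  rw [trace_mul_fin_two, adjugate_fin_two]
  simp [sub_eq_add_neg]

lemma det_add_fin_two (A B : Matrix (Fin 2) (Fin 2) R) :
    (A + B).det = A.det + (A.adjugate * B).trace + B.det := by
  simp only [det_fin_two, trace_adjugate_mul_fin_two, Matrix.add_apply]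
  ring

lemma det_adjugate_add_smul_fin_two (A N : Matrix (Fin 2) (Fin 2) R) (t : R) :
    (A.adjugate + t • N).det = A.det + t * (A * N).trace + t ^ 2 * N.det := by
  rw [det_add_fin_two, det_adjugate, adjugate_adjugate A (by simp)]
  simp

end CommRing

section Involution

variable {R n : Type*} [CommRing R] [CharP R 2] [Fintype n] [DecidableEq n]

lemma det_eq_one_of_mul_self_eq_one [NoZeroDivisors R] {J : Matrix n n R} (hJ : J * J = 1) :
    J.det = 1 :=
  CharTwo.sq_injective (by simp only [sq, ← det_mul, hJ, det_one, mul_one])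

lemma mul_self_eq_one_of_trace_eq_zero {J : Matrix (Fin 2) (Fin 2) R} (hdet : J.det = 1)
    (htr : J.trace = 0) : J * J = 1 := by
  have neg_one : (-1 : Matrix (Fin 2) (Fin 2) R) = 1 := by
    rw [← neg_one_smul R, CharTwo.neg_eq, one_smul]
  rw [mul_self_fin_two, htr, hdet, zero_smul, one_smul, zero_sub, neg_one]

end Involution

section ProdInv

variable {F : Type*} [Field F]

-- Transvections do it unless `M` is diagonal, in which case a rotation by a right angle does.
lemma exists_det_eq_one_trace_mul_eq_zero (M : Matrix (Fin 2) (Fin 2) F) :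
    ∃ A : Matrix (Fin 2) (Fin 2) F,
      A.det = 1 ∧ (A.trace = 0 ∨ A.trace = 2) ∧ (A * M).trace = 0 := by
  by_cases h₁₀ : M 1 0 = 0
  · by_cases h₀₁ : M 0 1 = 0
    · exact ⟨!![0, 1; -1, 0], by simp, by simp [trace_fin_two],
        by rw [trace_mul_fin_two]; simp [h₁₀, h₀₁]⟩
    · refine ⟨!![1, 0; -M.trace / M 0 1, 1], by simp,
        .inr (by simp [trace_fin_two, one_add_one_eq_two]), ?_⟩
      rw [trace_mul_fin_two, trace_fin_two]
      simp only [neg_add_rev, of_apply, cons_val', cons_val_zero, cons_val_one, cons_val_fin_one,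
        one_mul, zero_mul, add_zero]
      field_simp
      ring
  · refine ⟨!![1, -M.trace / M 1 0; 0, 1], by simp,
      .inr (by simp [trace_fin_two, one_add_one_eq_two]), ?_⟩
    rw [trace_mul_fin_two, trace_fin_two]
    simp only [neg_add_rev, of_apply, cons_val', cons_val_zero, cons_val_one, cons_val_fin_one,
      one_mul, zero_mul, add_zero]
    field_simp
    ring

lemma prodInv2_subset_prodInv3 (n : ℕ) : ProdInv2 F n ⊆ ProdInv3 F n := by
  rintro _ ⟨J₁, J₂, h₁, h₂, rfl⟩
  exact ⟨J₁, J₂, 1, h₁, h₂, mul_one 1, (mul_one _).symm⟩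

lemma prodInv3_subset_prodInv4 (n : ℕ) : ProdInv3 F n ⊆ ProdInv4 F n := by
  rintro _ ⟨J₁, J₂, J₃, h₁, h₂, h₃, rfl⟩
  exact ⟨J₁, J₂, J₃, 1, h₁, h₂, h₃, mul_one 1, (mul_one _).symm⟩

variable [CharP F 2]

lemma prodInv4_subset_det_eq_one (n : ℕ) : ProdInv4 F n ⊆ {A | A.det = 1} := by
  rintro _ ⟨J₁, J₂, J₃, J₄, h₁, h₂, h₃, h₄, rfl⟩
  simp [det_eq_one_of_mul_self_eq_one, h₁, h₂, h₃, h₄]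

lemma det_eq_one_subset_prodInv2 : {A | A.det = 1} ⊆ ProdInv2 F 2 := by
  intro A (hA : A.det = 1)
  obtain ⟨J, hJ, htr, hJA⟩ := exists_det_eq_one_trace_mul_eq_zero A
  simp only [CharTwo.two_eq_zero, or_self] at htr
  have hJJ : J * J = 1 := mul_self_eq_one_of_trace_eq_zero hJ htr
  refine ⟨J, J * A, hJJ, mul_self_eq_one_of_trace_eq_zero ?_ hJA, ?_⟩
  · rw [det_mul, hJ, hA, one_mul]
  · rw [← mul_assoc, hJJ, one_mul]

lemma eq_det_eq_one_of_eq_prodInv {S : Set (Matrix (Fin 2) (Fin 2) F)}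
    (hS : S = ProdInv2 F 2 ∨ S = ProdInv3 F 2 ∨ S = ProdInv4 F 2) : S = {A | A.det = 1} := by
  have h₂₃ := prodInv2_subset_prodInv3 (F := F) 2
  have h₃₄ := prodInv3_subset_prodInv4 (F := F) 2
  have h₄₁ := prodInv4_subset_det_eq_one (F := F) 2
  have h₁₂ := det_eq_one_subset_prodInv2 (F := F)
  rcases hS with rfl | rfl | rfl
  · exact (h₂₃.trans (h₃₄.trans h₄₁)).antisymm h₁₂
  · exact (h₃₄.trans h₄₁).antisymm (h₁₂.trans h₂₃)
  · exact h₄₁.antisymm (h₁₂.trans (h₂₃.trans h₃₄))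

end ProdInv

section DetPreserver

variable {R : Type*} [CommRing R]

lemma map_eq_sum_fin_two {M : Type*} [AddCommMonoid M] [Module R M]
    (T : Matrix (Fin 2) (Fin 2) R →ₗ[R] M) (X : Matrix (Fin 2) (Fin 2) R) :
    T X = X 0 0 • T !![1, 0; 0, 0] + X 0 1 • T !![0, 1; 0, 0] + X 1 0 • T !![0, 0; 1, 0] +
      X 1 1 • T !![0, 0; 0, 1] := by
  simp only [← map_smul, ← map_add]
  congr 1
  ext i j
  fin_cases i <;> fin_cases j <;> simp

variable {T : Matrix (Fin 2) (Fin 2) R →ₗ[R] Matrix (Fin 2) (Fin 2) R}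

-- `det ∘ T` is a quadratic form in the four entries of `X`, and the singular matrices with entries
-- `0` and `1` determine its coefficients up to the common factor `det (T 1)`.
lemma det_map_eq_det_map_one_mul_det (hT : ∀ N, N.det = 0 → (T N).det = 0)
    (X : Matrix (Fin 2) (Fin 2) R) : (T X).det = (T 1).det * X.det := by
  have polar {M N : Matrix (Fin 2) (Fin 2) R} (hM : M.det = 0) (hN : N.det = 0)
      (hMN : (M + N).det = 0) : ((T M).adjugate * T N).trace = 0 := by
    have h := hT (M + N) hMN
    rwa [map_add, det_add_fin_two, hT M hM, hT N hN, zero_add, add_zero] at h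
  have h₀₀ := hT !![1, 0; 0, 0] (by simp)
  have h₀₁ := hT !![0, 1; 0, 0] (by simp)
  have h₁₀ := hT !![0, 0; 1, 0] (by simp)
  have h₁₁ := hT !![0, 0; 0, 1] (by simp)
  have row₀ := polar (M := !![1, 0; 0, 0]) (N := !![0, 1; 0, 0]) (by simp) (by simp) (by simp)
  have row₁ := polar (M := !![0, 0; 1, 0]) (N := !![0, 0; 0, 1]) (by simp) (by simp) (by simp)
  have col₀ := polar (M := !![1, 0; 0, 0]) (N := !![0, 0; 1, 0]) (by simp) (by simp) (by simp)
  have col₁ := polar (M := !![0, 1; 0, 0]) (N := !![0, 0; 0, 1]) (by simp) (by simp) (by simp)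
  have ones := polar (M := !![1, 0; 0, 0] + !![0, 1; 0, 0])
    (N := !![0, 0; 1, 0] + !![0, 0; 0, 1]) (by simp) (by simp) (by simp)
  rw [map_add, map_add] at ones
  rw [map_eq_sum_fin_two T X, map_eq_sum_fin_two T 1]
  simp only [trace_adjugate_mul_fin_two, Matrix.add_apply] at row₀ row₁ col₀ col₁ ones
  simp only [det_fin_two, Matrix.add_apply, Matrix.smul_apply, smul_eq_mul, one_apply_eq, ne_eq,
    one_apply_ne, zero_ne_one, one_ne_zero, not_false_eq_true] at h₀₀ h₀₁ h₁₀ h₁₁ ⊢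
  linear_combination
    (X 0 0 ^ 2 - X 0 0 * X 1 1 + X 0 1 * X 1 0) * h₀₀ + X 0 1 ^ 2 * h₀₁ + X 1 0 ^ 2 * h₁₀ +
    (X 1 1 ^ 2 - X 0 0 * X 1 1 + X 0 1 * X 1 0) * h₁₁ + X 0 0 * X 0 1 * row₀ +
    X 1 0 * X 1 1 * row₁ + X 1 0 * (X 0 0 - X 0 1) * col₀ +
    X 0 1 * (X 1 1 - X 1 0) * col₁ + X 0 1 * X 1 0 * ones

lemma trace_adjugate_map_mul_map (hT : ∀ X, (T X).det = X.det) (A B : Matrix (Fin 2) (Fin 2) R) :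
    ((T A).adjugate * T B).trace = (A.adjugate * B).trace := by
  have h := hT (A + B)
  rw [map_add, det_add_fin_two, det_add_fin_two, hT, hT] at h
  exact add_left_cancel (add_right_cancel h)

end DetPreserver

section PreservesDetOne

variable {F : Type*} [Field F] {T : Matrix (Fin 2) (Fin 2) F →ₗ[F] Matrix (Fin 2) (Fin 2) F}

lemma det_map_eq_zero_of_ne_zero_of_ne_one (hT : ∀ A, A.det = 1 → (T A).det = 1) {b : F}
    (hb₀ : b ≠ 0) (hb₁ : b ≠ 1) {N : Matrix (Fin 2) (Fin 2) F} (hN : N.det = 0) :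
    (T N).det = 0 := by
  obtain ⟨A, hA, -, hAN⟩ := exists_det_eq_one_trace_mul_eq_zero N
  have line (t : F) : (T A.adjugate + t • T N).det = 1 := by
    rw [← map_smul, ← map_add]
    apply hT
    rw [det_adjugate_add_smul_fin_two, hA, hAN, hN, mul_zero, mul_zero, add_zero, add_zero]
  have line' (t : F) :
      (T A.adjugate).det + t * ((T A.adjugate).adjugate * T N).trace + t ^ 2 * (T N).det = 1 := by
    simpa [det_add_fin_two, det_smul] using line t
  have key : b * (b - 1) * (T N).det = 0 := by
    linear_combination line' b - b * line' 1 - (1 - b) * line' 0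
  exact (mul_eq_zero.mp key).resolve_left (mul_ne_zero hb₀ (sub_ne_zero.mpr hb₁))

lemma det_eq_one_of_det_map_eq_one [Finite F] (hinj : Function.Injective T)
    (hT : ∀ A, A.det = 1 → (T A).det = 1) {N : Matrix (Fin 2) (Fin 2) F}
    (hN : (T N).det = 1) : N.det = 1 := by
  have hbij : Set.BijOn T {A | A.det = 1} {A | A.det = 1} :=
    ((Set.toFinite _).injOn_iff_bijOn_of_mapsTo hT).mp hinj.injOn
  obtain ⟨A, hA, hAN⟩ := hbij.surjOn hN
  rwa [← hinj hAN]

lemma det_map_eq_zero (hinj : Function.Injective T) (hT : ∀ A, A.det = 1 → (T A).det = 1)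
    {N : Matrix (Fin 2) (Fin 2) F} (hN : N.det = 0) : (T N).det = 0 := by
  by_cases hF : ∃ b : F, b ≠ 0 ∧ b ≠ 1
  · obtain ⟨b, hb₀, hb₁⟩ := hF
    exact det_map_eq_zero_of_ne_zero_of_ne_one hT hb₀ hb₁ hN
  · push Not at hF
    have : Finite F := Set.finite_univ_iff.mp <|
      (Set.toFinite {0, 1}).subset fun x _ ↦ or_iff_not_imp_left.mpr (hF x)
    by_contra hne
    exact zero_ne_one (hN.symm.trans (det_eq_one_of_det_map_eq_one hinj hT (hF _ hne)))

lemma det_map_eq_det (hinj : Function.Injective T) (hT : ∀ A, A.det = 1 → (T A).det = 1)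
    (X : Matrix (Fin 2) (Fin 2) F) : (T X).det = X.det := by
  rw [det_map_eq_det_map_one_mul_det (fun _ ↦ det_map_eq_zero hinj hT), hT 1 det_one, one_mul]

end PreservesDetOne

section UnimodularEquivalence

variable {R n : Type*} [CommRing R] [Fintype n] [DecidableEq n]

/-- Unimodular equivalences, possibly after transposition: the standard form of the linear maps
preserving the determinant. Invertibility of `P` and `Q` is left out, since it follows from
`(P * Q).det = 1`. -/
def IsUnimodularEquivalence (f : Matrix n n R → Matrix n n R) : Prop :=
  ∃ P Q : Matrix n n R, (P * Q).det = 1 ∧ ((∀ X, f X = P * X * Q) ∨ ∀ X, f X = P * Xᵀ * Q)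

namespace IsUnimodularEquivalence

variable {f g : Matrix n n R → Matrix n n R}

lemma det_map (hf : IsUnimodularEquivalence f) (X : Matrix n n R) : (f X).det = X.det := by
  obtain ⟨P, Q, hPQ, hf | hf⟩ := hf
  all_goals
    rw [det_mul] at hPQ
    simp only [hf, det_mul, det_transpose]
    linear_combination X.det * hPQ

lemma transpose (hf : IsUnimodularEquivalence fun X ↦ (f X)ᵀ) : IsUnimodularEquivalence f := by
  obtain ⟨P, Q, hPQ, hf⟩ := hf
  refine ⟨Qᵀ, Pᵀ, by rw [← transpose_mul, det_transpose, hPQ], hf.symm.imp ?_ ?_⟩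
  all_goals
    intro hf X
    rw [← transpose_transpose (f X), show (f X)ᵀ = _ from hf X]
    simp only [transpose_mul, transpose_transpose, mul_assoc]

lemma mul_mul (hg : IsUnimodularEquivalence g) {P Q : Matrix n n R} (hPQ : (P * Q).det = 1)
    (hf : ∀ X, f X = P * g X * Q) : IsUnimodularEquivalence f := by
  obtain ⟨P', Q', hPQ', hg⟩ := hg
  refine ⟨P * P', Q' * Q, ?_, hg.imp ?_ ?_⟩
  · rw [det_mul] at hPQ hPQ'
    simp only [det_mul]
    linear_combination P'.det * Q'.det * hPQ + hPQ'
  all_goals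
    intro hg X
    simp only [hf, hg, mul_assoc]

end IsUnimodularEquivalence

end UnimodularEquivalence

section Classification

lemma exists_eq_vecMulVec_of_det_eq_zero {F : Type*} [Field F] {M : Matrix (Fin 2) (Fin 2) F}
    (hM : M.det = 0) : ∃ u v : Fin 2 → F, M = vecMulVec u v := by
  rw [det_fin_two, sub_eq_zero] at hM
  by_cases h₀₀ : M 0 0 = 0
  · obtain h₀₁ | h₁₀ := mul_eq_zero.mp (show M 0 1 * M 1 0 = 0 by rw [← hM, h₀₀, zero_mul])
    · exact ⟨![0, 1], M 1, by
        ext i j; fin_cases i <;> fin_cases j <;> simp [vecMulVec_apply, h₀₀, h₀₁]⟩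
    · exact ⟨(M · 1), ![0, 1], by
        ext i j; fin_cases i <;> fin_cases j <;> simp [vecMulVec_apply, h₀₀, h₁₀]⟩
  · have h₁₁ : M 1 1 = M 1 0 / M 0 0 * M 0 1 := by
      field_simp
      linear_combination hM
    exact ⟨![1, M 1 0 / M 0 0], M 0, by
      ext i j; fin_cases i <;> fin_cases j <;> simp [vecMulVec_apply, h₀₀, h₁₁]⟩

lemma exists_mul_diag_mul_of_det_eq_zero {F : Type*} [Field F] {M N : Matrix (Fin 2) (Fin 2) F}
    (hM : M.det = 0) (hN : N.det = 0) :
    ∃ P Q, M = P * !![1, 0; 0, 0] * Q ∧ N = P * !![0, 0; 0, 1] * Q := by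
  obtain ⟨u, v, rfl⟩ := exists_eq_vecMulVec_of_det_eq_zero hM
  obtain ⟨u', v', rfl⟩ := exists_eq_vecMulVec_of_det_eq_zero hN
  refine ⟨!![u 0, u' 0; u 1, u' 1], !![v 0, v 1; v' 0, v' 1], ?_, ?_⟩ <;>
  · ext i j
    fin_cases i <;> fin_cases j <;> simp [vecMulVec_apply, mul_apply]

variable {R : Type*} [CommRing R] {T : Matrix (Fin 2) (Fin 2) R →ₗ[R] Matrix (Fin 2) (Fin 2) R}

lemma map_apply_diag_of_fixed (hT : ∀ X, (T X).det = X.det)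
    (h₀ : T !![1, 0; 0, 0] = !![1, 0; 0, 0]) (h₁ : T !![0, 0; 0, 1] = !![0, 0; 0, 1])
    (X : Matrix (Fin 2) (Fin 2) R) : T X 0 0 = X 0 0 ∧ T X 1 1 = X 1 1 := by
  have polar₀ := trace_adjugate_map_mul_map hT !![1, 0; 0, 0] X
  have polar₁ := trace_adjugate_map_mul_map hT !![0, 0; 0, 1] X
  rw [h₀, trace_adjugate_mul_fin_two, trace_adjugate_mul_fin_two] at polar₀
  rw [h₁, trace_adjugate_mul_fin_two, trace_adjugate_mul_fin_two] at polar₁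
  exact ⟨by simpa using polar₁, by simpa using polar₀⟩

lemma isUnimodularEquivalence_of_fixed_of_apply_eq_zero (hT : ∀ X, (T X).det = X.det)
    (h₀ : T !![1, 0; 0, 0] = !![1, 0; 0, 0]) (h₁ : T !![0, 0; 0, 1] = !![0, 0; 0, 1])
    (hzero : T !![0, 1; 0, 0] 1 0 = 0) : IsUnimodularEquivalence T := by
  obtain ⟨b, hB⟩ : ∃ b, T !![0, 1; 0, 0] = !![0, b; 0, 0] := by
    obtain ⟨b₀₀, b₁₁⟩ := map_apply_diag_of_fixed hT h₀ h₁ !![0, 1; 0, 0]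
    exact ⟨T !![0, 1; 0, 0] 0 1, (eta_fin_two _).trans (by simp [b₀₀, b₁₁, hzero])⟩
  have hbC : b * T !![0, 0; 1, 0] 1 0 = 1 := by
    have polar := trace_adjugate_map_mul_map hT !![0, 1; 0, 0] !![0, 0; 1, 0]
    rw [hB, trace_adjugate_mul_fin_two, trace_adjugate_mul_fin_two] at polar
    simpa using polar
  obtain ⟨c, hC⟩ : ∃ c, T !![0, 0; 1, 0] = !![0, 0; c, 0] := by
    obtain ⟨c₀₀, c₁₁⟩ := map_apply_diag_of_fixed hT h₀ h₁ !![0, 0; 1, 0]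
    have hdet : T !![0, 0; 1, 0] 0 1 * T !![0, 0; 1, 0] 1 0 = 0 := by
      simpa [det_fin_two, c₀₀] using hT !![0, 0; 1, 0]
    have c₀₁ : T !![0, 0; 1, 0] 0 1 = 0 := by
      linear_combination b * hdet - T !![0, 0; 1, 0] 0 1 * hbC
    exact ⟨T !![0, 0; 1, 0] 1 0, (eta_fin_two _).trans (by simp [c₀₀, c₁₁, c₀₁])⟩
  have hbc : b * c = 1 := by simpa [hC] using hbC
  refine ⟨!![1, 0; 0, c], !![1, 0; 0, b], by simp [mul_comm c, hbc], .inl fun X ↦ ?_⟩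
  calc T X = !![X 0 0, X 0 1 * b; X 1 0 * c, X 1 1] := by
        rw [map_eq_sum_fin_two T X, h₀, h₁, hB, hC]
        simp
    _ = !![1, 0; 0, c] * X * !![1, 0; 0, b] := by
        rw [eta_fin_two X, mul_fin_two, mul_fin_two]
        simp [mul_comm c, mul_assoc, hbc]

lemma isUnimodularEquivalence_of_fixed [IsDomain R] (hT : ∀ X, (T X).det = X.det)
    (h₀ : T !![1, 0; 0, 0] = !![1, 0; 0, 0]) (h₁ : T !![0, 0; 0, 1] = !![0, 0; 0, 1]) :
    IsUnimodularEquivalence T := by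
  obtain ⟨b₀₀, -⟩ := map_apply_diag_of_fixed hT h₀ h₁ !![0, 1; 0, 0]
  have hdet : T !![0, 1; 0, 0] 0 1 * T !![0, 1; 0, 0] 1 0 = 0 := by
    simpa [det_fin_two, b₀₀] using hT !![0, 1; 0, 0]
  obtain hzero | hzero := mul_eq_zero.mp hdet
  · apply IsUnimodularEquivalence.transpose
    refine isUnimodularEquivalence_of_fixed_of_apply_eq_zero
      (T := (transposeLinearEquiv (Fin 2) (Fin 2) R R).toLinearMap ∘ₗ T) ?_ ?_ ?_ hzero
    · exact fun X ↦ (det_transpose _).trans (hT X)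
    · simp [h₀, ← Matrix.ext_iff]
    · simp [h₁, ← Matrix.ext_iff]
  · exact isUnimodularEquivalence_of_fixed_of_apply_eq_zero hT h₀ h₁ hzero

theorem isUnimodularEquivalence_of_det_map {F : Type*} [Field F]
    {T : Matrix (Fin 2) (Fin 2) F →ₗ[F] Matrix (Fin 2) (Fin 2) F}
    (hT : ∀ X, (T X).det = X.det) : IsUnimodularEquivalence T := by
  obtain ⟨P, Q, hP, hQ⟩ := exists_mul_diag_mul_of_det_eq_zero
    (M := T !![1, 0; 0, 0]) (N := T !![0, 0; 0, 1]) (by simp [hT]) (by simp [hT])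
  have hPQ : (P * Q).det = 1 := by
    have : P * Q = T 1 := by
      have hsum : (1 : Matrix (Fin 2) (Fin 2) F) = !![1, 0; 0, 0] + !![0, 0; 0, 1] := by
        simp [one_fin_two]
      rw [hsum, map_add, hP, hQ, ← add_mul, ← mul_add, ← hsum, mul_one]
    rw [this, hT, det_one]
  obtain ⟨hPu, hQu⟩ := IsUnit.mul_iff.mp ((isUnit_iff_isUnit_det _).mpr (hPQ ▸ isUnit_one))
  rw [isUnit_iff_isUnit_det] at hPu hQu
  let T' : Matrix (Fin 2) (Fin 2) F →ₗ[F] Matrix (Fin 2) (Fin 2) F :=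
    LinearMap.mulRight F Q⁻¹ ∘ₗ LinearMap.mulLeft F P⁻¹ ∘ₗ T
  have hT' (X) : T' X = P⁻¹ * T X * Q⁻¹ := rfl
  have hTT' (X) : T X = P * T' X * Q := by
    rw [hT', mul_assoc P⁻¹, mul_nonsing_inv_cancel_left _ _ hPu,
      nonsing_inv_mul_cancel_right _ _ hQu]
  refine (isUnimodularEquivalence_of_fixed (T := T') (fun X ↦ ?_) ?_ ?_).mul_mul hPQ hTT'
  · rw [← hT X, hTT', det_mul, det_mul]
    rw [det_mul] at hPQ
    linear_combination -(T' X).det * hPQ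
  · rw [hT', hP, mul_assoc P, nonsing_inv_mul_cancel_left _ _ hPu,
      mul_nonsing_inv_cancel_right _ _ hQu]
  · rw [hT', hQ, mul_assoc P, nonsing_inv_mul_cancel_left _ _ hPu,
      mul_nonsing_inv_cancel_right _ _ hQu]

end Classification

theorem stmt17 (F : Type*) [Field F] (hchar : ringChar F = 2)
    (S : Set (Matrix (Fin 2) (Fin 2) F))
    (hS : S = ProdInv2 F 2 ∨ S = ProdInv3 F 2 ∨ S = ProdInv4 F 2)
    (T : Matrix (Fin 2) (Fin 2) F →ₗ[F] Matrix (Fin 2) (Fin 2) F)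
    (hT : Function.Bijective T) :
    (∀ A ∈ S, T A ∈ S) ↔
      ∃ P Q : Matrix (Fin 2) (Fin 2) F, IsUnit P ∧ IsUnit Q ∧ (P * Q).det = 1 ∧
        ((∀ X, T X = P * X * Q) ∨ (∀ X, T X = P * Xᵀ * Q)) := by
  have : CharP F 2 := ringChar.of_eq hchar
  rw [eq_det_eq_one_of_eq_prodInv hS]
  constructor
  · intro h
    obtain ⟨P, Q, hPQ, hPQT⟩ :=
      isUnimodularEquivalence_of_det_map (det_map_eq_det hT.injective h)
    obtain ⟨hP, hQ⟩ := IsUnit.mul_iff.mp ((isUnit_iff_isUnit_det _).mpr (hPQ ▸ isUnit_one))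
    exact ⟨P, Q, hP, hQ, hPQ, hPQT⟩
  · rintro ⟨P, Q, -, -, hPQ, hPQT⟩ A hA
    exact (IsUnimodularEquivalence.det_map ⟨P, Q, hPQ, hPQT⟩ A).trans hA
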